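/- arXiv:1410.2122 — 10 statements merged into one kernel-verified Lean document; each statement's English description precedes it below -/
import Mathlib

section
/- Let (G, ε) be a group with action and let A be an ideal of (G, ε). Then for all a₁, a₂ ∈ A and g₁, g₂ ∈ G, the element (a₁ + g₁)^{a₂ + g₂} lies in the coset g₁^{g₂} + A; i.e., there exists a ∈ A with (a₁ + g₁)^{a₂ + g₂} = g₁^{g₂} + a. -/
/-- A group with action on itself: a (not necessarily abelian, additively written)
group `G` with a map `ε : G × G → G`, `ε g h = g ^ h =: act g h`, satisfying the axioms. -/
structure GwA (G : Type*) [AddGroup G] where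
  act : G → G → G
  act_add : ∀ g h k : G, act g (h + k) = act (act g h) k
  act_zero : ∀ g : G, act g 0 = g
  add_act : ∀ g g' h : G, act (g + g') h = act g h + act g' h
  zero_act : ∀ h : G, act 0 h = 0

namespace GwA

variable {G : Type*} [AddGroup G]

def IsSubobject (ε : GwA G) (H : Set G) : Prop :=
  (0 : G) ∈ H ∧ (∀ a b, a ∈ H → b ∈ H → a + b ∈ H) ∧ (∀ a, a ∈ H → -a ∈ H) ∧
    (∀ a b, a ∈ H → b ∈ H → ε.act a b ∈ H)

def IsIdeal (ε : GwA G) (A : Set G) : Prop :=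
  A.Nonempty ∧ (∀ a b, a ∈ A → b ∈ A → a + b ∈ A) ∧ (∀ a, a ∈ A → -a ∈ A) ∧
    (∀ (g : G) a, a ∈ A → -g + a + g ∈ A) ∧
    (∀ a ∈ A, ∀ g : G, ε.act a g ∈ A) ∧
    (∀ a ∈ A, ∀ g : G, -g + ε.act g a ∈ A)

/-- `I` is an ideal of the subobject `S`. -/
def IsIdealIn (ε : GwA G) (S I : Set G) : Prop :=
  I ⊆ S ∧ I.Nonempty ∧ (∀ a b, a ∈ I → b ∈ I → a + b ∈ I) ∧ (∀ a, a ∈ I → -a ∈ I) ∧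
    (∀ s ∈ S, ∀ a ∈ I, -s + a + s ∈ I) ∧
    (∀ a ∈ I, ∀ s ∈ S, ε.act a s ∈ I) ∧
    (∀ a ∈ I, ∀ s ∈ S, -s + ε.act s a ∈ I)

/-- Subobject generated by a set. -/
def subGen (ε : GwA G) (X : Set G) : Set G := ⋂₀ {H | ε.IsSubobject H ∧ X ⊆ H}

/-- Ideal of the subobject `S` generated by a set. -/
def idealGenIn (ε : GwA G) (S X : Set G) : Set G := ⋂₀ {I | ε.IsIdealIn S I ∧ X ⊆ I}

/-- `[g, g'] = -g + g^(g')`. -/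
def bracket (ε : GwA G) (a b : G) : G := -a + ε.act a b

/-- `(g, g') = -g - g' + g + g'`. -/
def gcomm (a b : G) : G := -a - b + a + b

/-- Commutator `[A, B]` of two subobjects. -/
def commObj (ε : GwA G) (A B : Set G) : Set G :=
  ε.idealGenIn (ε.subGen (A ∪ B))
    {x | ∃ a ∈ A, ∃ b ∈ B, x = ε.bracket a b ∨ x = ε.bracket b a ∨ x = gcomm a b}

/-- `A + B = {a + b : a ∈ A, b ∈ B}`. -/
def setSum (A B : Set G) : Set G := {x | ∃ a ∈ A, ∃ b ∈ B, x = a + b}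

/-- Sum of a finite family of subsets of `G`. -/
def finSum : ∀ {m : ℕ}, (Fin m → Set G) → Set G
  | 0, _ => {0}
  | m + 1, f => setSum (finSum fun i : Fin m => f i.castSucc) (f (Fin.last m))

/-- Lower central series, 0-indexed: `lcs ε n = G_{n+1}`, so `lcs ε 0 = G₁ = G` and
`G_n = [G₁,G_{n-1}] + [G₂,G_{n-2}] + ⋯ + [G_{n-1},G₁]`. -/
def lcs (ε : GwA G) : ℕ → Set G
  | 0 => Set.univ
  | n + 1 => finSum fun i : Fin (n + 1) => ε.commObj (ε.lcs i.val) (ε.lcs (n - i.val))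
  decreasing_by
  · exact i.isLt
  · omega

/-- Center of a group with action. -/
def center (ε : GwA G) : Set G :=
  {g | ∀ h : G, g + h = h + g ∧ ε.act g h = g ∧ ε.act h g = h}

/-- Condition 1. -/
def Cond1 (ε : GwA G) : Prop :=
  ∀ x y z : G,
    x - ε.act x (ε.act z x) + ε.act x (y + ε.act z x) - x + ε.act x z
      - ε.act x (z + ε.act y z) = 0

end GwA

/-- If `A` is an ideal of the group with action `(G, ε)`, then for all
`a₁, a₂ ∈ A` and `g₁, g₂ ∈ G` we have `(a₁ + g₁)^(a₂ + g₂) ∈ g₁^(g₂) + A`. -/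
theorem gwa_act_mem_coset {G : Type*} [AddGroup G] (ε : GwA G) (A : Set G)
    (hA : ε.IsIdeal A) :
    ∀ a₁ a₂ g₁ g₂ : G, a₁ ∈ A → a₂ ∈ A →
      ∃ a ∈ A, ε.act (a₁ + g₁) (a₂ + g₂) = ε.act g₁ g₂ + a := by
  obtain ⟨-, hadd, -, hconj, hact, hbr⟩ := hA
  intro a₁ a₂ g₁ g₂ h₁ h₂
  -- `(a₁ + g₁)^a₂ = g₁ + c` with `c = (-g₁ + a₁^a₂ + g₁) + (-g₁ + g₁^a₂) ∈ A`; then apply `g₂`.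
  refine ⟨ε.act ((-g₁ + ε.act a₁ a₂ + g₁) + (-g₁ + ε.act g₁ a₂)) g₂,
    hact _ (hadd _ _ (hconj _ _ (hact _ h₁ _)) (hbr _ h₂ _)) _, ?_⟩
  rw [ε.act_add, ε.add_act a₁ g₁ a₂, ← ε.add_act g₁]
  congr 1
  simp [add_assoc]
end

section
/- Let (G, ε) be a group with action, let A be an ideal of (G, ε), and let B be a subobject of (G, ε). Then the set A + B = {a + b : a ∈ A, b ∈ B} is a subobject of (G, ε), it contains both A and B, and every subobject of (G, ε) containing A and B contains A + B; hence A + B is the subobject {A, B} generated by A and B. -/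
/-- If `A` is an ideal and `B` a subobject of `(G, ε)`, then
`A + B` is a subobject containing `A` and `B`, and is contained in every subobject
containing `A` and `B`; hence `A + B = {A, B}`, the subobject generated by `A ∪ B`. -/
theorem gwa_ideal_add_subobject {G : Type*} [AddGroup G] (ε : GwA G) (A B : Set G)
    (hA : ε.IsIdeal A) (hB : ε.IsSubobject B) :
    ε.IsSubobject (GwA.setSum A B) ∧ A ⊆ GwA.setSum A B ∧ B ⊆ GwA.setSum A B ∧
      (∀ H : Set G, ε.IsSubobject H → A ⊆ H → B ⊆ H → GwA.setSum A B ⊆ H) ∧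
      GwA.setSum A B = ε.subGen (A ∪ B) := by
  obtain ⟨⟨a₀, ha₀⟩, hAadd, hAneg, hAconj, hAact, hAbr⟩ := hA
  obtain ⟨hB0, hBadd, hBneg, hBact⟩ := hB
  have hA0 : (0 : G) ∈ A := by simpa using hAadd _ _ ha₀ (hAneg _ ha₀)
  have hconj : ∀ (g : G) a, a ∈ A → g + a + -g ∈ A := fun g a ha => by
    simpa using hAconj (-g) a ha
  have hAsub : A ⊆ GwA.setSum A B := fun a ha => ⟨a, ha, 0, hB0, by simp⟩
  have hBsub : B ⊆ GwA.setSum A B := fun b hb => ⟨0, hA0, b, hb, by simp⟩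
  have hmin : ∀ H : Set G, ε.IsSubobject H → A ⊆ H → B ⊆ H → GwA.setSum A B ⊆ H := by
    rintro H ⟨-, hadd, -, -⟩ hAH hBH _ ⟨a, ha, b, hb, rfl⟩
    exact hadd _ _ (hAH ha) (hBH hb)
  have hsub : ε.IsSubobject (GwA.setSum A B) := by
    refine ⟨hAsub hA0, ?_, ?_, ?_⟩
    · rintro _ _ ⟨a, ha, b, hb, rfl⟩ ⟨a', ha', b', hb', rfl⟩
      exact ⟨a + (b + a' + -b), hAadd _ _ ha (hconj b a' ha'), b + b', hBadd _ _ hb hb',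
        by simp [add_assoc]⟩
    · rintro _ ⟨a, ha, b, hb, rfl⟩
      exact ⟨-b + -a + b, hAconj b _ (hAneg _ ha), -b, hBneg _ hb, by simp [add_assoc]⟩
    · rintro _ _ ⟨a, ha, b, hb, rfl⟩ ⟨a', ha', b', hb', rfl⟩
      -- The `A`-part of the exponent changes `b` by an element of `A` added on the right;
      -- conjugation then moves the resulting `A`-term to the left.
      have key : ε.act b (a' + b') = ε.act b b' + ε.act (-b + ε.act b a') b' := by
        rw [← ε.add_act, add_neg_cancel_left, ε.act_add]
      refine ⟨ε.act a (a' + b') + (ε.act b b' + ε.act (-b + ε.act b a') b' + -ε.act b b'),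
        hAadd _ _ (hAact a ha _) (hconj _ _ (hAact _ (hAbr a' ha' b) b')),
        ε.act b b', hBact _ _ hb hb', ?_⟩
      rw [ε.add_act, key]
      simp only [add_assoc, neg_add_cancel, add_zero]
  refine ⟨hsub, hAsub, hBsub, hmin, Set.Subset.antisymm ?_ ?_⟩
  · rintro x hx H ⟨hH, hAB⟩
    exact hmin H hH (Set.subset_union_left.trans hAB) (Set.subset_union_right.trans hAB) hx
  · exact fun x hx => hx _ ⟨hsub, Set.union_subset hAsub hBsub⟩
end

section
/- Let (G, ε) be a group with action. If A and B are both ideals of (G, ε), then the set A + B = {a + b : a ∈ A, b ∈ B} is also an ideal of (G, ε). -/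
/-- If `A` and `B` are ideals of the group with action `(G, ε)`,
then `A + B = {a + b : a ∈ A, b ∈ B}` is also an ideal of `(G, ε)`. -/
theorem gwa_ideal_add_ideal {G : Type*} [AddGroup G] (ε : GwA G) (A B : Set G)
    (hA : ε.IsIdeal A) (hB : ε.IsIdeal B) : ε.IsIdeal (GwA.setSum A B) := by
  obtain ⟨⟨a₀, ha₀⟩, hAadd, hAneg, hAconj, hAact, hAbr⟩ := hA
  obtain ⟨⟨b₀, hb₀⟩, hBadd, hBneg, hBconj, hBact, hBbr⟩ := hB
  refine ⟨⟨a₀ + b₀, a₀, ha₀, b₀, hb₀, rfl⟩, ?_, ?_, ?_, ?_, ?_⟩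
  · rintro _ _ ⟨a, ha, b, hb, rfl⟩ ⟨a', ha', b', hb', rfl⟩
    exact ⟨a + a', hAadd _ _ ha ha', (-a' + b + a') + b', hBadd _ _ (hBconj a' b hb) hb',
      by simp [add_assoc]⟩
  · rintro _ ⟨a, ha, b, hb, rfl⟩
    exact ⟨-a, hAneg a ha, -(-a) + -b + -a, hBconj (-a) (-b) (hBneg b hb),
      by simp [add_assoc]⟩
  · rintro g _ ⟨a, ha, b, hb, rfl⟩
    exact ⟨-g + a + g, hAconj g a ha, -g + b + g, hBconj g b hb, by simp [add_assoc]⟩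
  · rintro _ ⟨a, ha, b, hb, rfl⟩ g
    exact ⟨ε.act a g, hAact a ha g, ε.act b g, hBact b hb g, ε.add_act a b g⟩
  · rintro _ ⟨a, ha, b, hb, rfl⟩ g
    exact ⟨-g + ε.act g a, hAbr a ha g, -ε.act g a + ε.act (ε.act g a) b, hBbr b hb _,
      by simp [add_assoc, ε.act_add]⟩
end

section
/- Let (G, ε) be a group with action and let A be an ideal of (G, ε). Then the induced action on the quotient group G/A, given on cosets by (g + A)^{h + A} = g^h + A, is well defined (i.e., independent of the choice of coset representatives g and h) and makes G/A a group with action: it satisfies x^{y+z} = (x^y)^z, x^0 = x, (x + x')^y = x^y + x'^y, and 0^y = 0 for all cosets x, x', y, z ∈ G/A. -/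
/-- If `A` is an ideal of `(G, ε)` (a normal subgroup satisfying the
two ideal conditions for the action), then the action `(g + A)^(h + A) = g^h + A`
on `G ⧸ A` is well defined and makes `G ⧸ A` a group with action. -/
theorem gwa_quotient_gwa {G : Type*} [AddGroup G] (ε : GwA G) (A : AddSubgroup G)
    [A.Normal]
    (hA₁ : ∀ a ∈ A, ∀ g : G, ε.act a g ∈ A)
    (hA₂ : ∀ a ∈ A, ∀ g : G, -g + ε.act g a ∈ A) :
    (∀ g g' h h' : G, -g' + g ∈ A → -h' + h ∈ A →
        -(ε.act g' h') + ε.act g h ∈ A) ∧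
      ∃ ε' : GwA (G ⧸ A), ∀ g h : G,
        ε'.act (QuotientAddGroup.mk g) (QuotientAddGroup.mk h) =
          QuotientAddGroup.mk (ε.act g h) := by
  have key : ∀ g g' h h' : G, -g' + g ∈ A → -h' + h ∈ A →
      -(ε.act g' h') + ε.act g h ∈ A := by
    intro g g' h h' hg hh
    -- With `g = g' + b` and `h = h' + a`, one has `g^h = (g'^h')^a + b^h`.
    have e : -(ε.act g' h') + ε.act g h =
        (-(ε.act g' h') + ε.act (ε.act g' h') (-h' + h)) + ε.act (-g' + g) h := by
      rw [← ε.act_add, add_neg_cancel_left, add_assoc, ← ε.add_act, add_neg_cancel_left]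
    rw [e]
    exact A.add_mem (hA₂ _ hh _) (hA₁ _ hg _)
  refine ⟨key, ⟨{
    act := Quotient.map₂ ε.act (fun g g' hg h h' hh => ?_)
    act_add := ?_
    act_zero := ?_
    add_act := ?_
    zero_act := ?_ }, fun g h => rfl⟩⟩
  · rw [← Quotient.eq_iff_equiv] at hg hh ⊢
    exact QuotientAddGroup.eq.mpr
      (key _ _ _ _ (QuotientAddGroup.eq.mp hg) (QuotientAddGroup.eq.mp hh))
  · rintro ⟨g⟩ ⟨h⟩ ⟨k⟩
    exact congrArg QuotientAddGroup.mk (ε.act_add g h k)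
  · rintro ⟨g⟩
    exact congrArg QuotientAddGroup.mk (ε.act_zero g)
  · rintro ⟨g⟩ ⟨g'⟩ ⟨h⟩
    exact congrArg QuotientAddGroup.mk (ε.add_act g g' h)
  · rintro ⟨h⟩
    exact congrArg QuotientAddGroup.mk (ε.zero_act h)
end

section
/- Let (G, ε) be a group with action and let G = G₁ ⊃ G₂ ⊃ ⋯ be its lower central series. Then for each n ≥ 1, G_{n+1} is an ideal of G_n (where G_n is regarded as a group with action via the restriction of ε). -/
namespace GwA

variable {G : Type*} [AddGroup G] {ε : GwA G}

theorem IsIdealIn.zero_mem {S I : Set G} (h : ε.IsIdealIn S I) : (0 : G) ∈ I := by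
  obtain ⟨-, ⟨x, hx⟩, hadd, hneg, -⟩ := h
  simpa using hadd _ _ hx (hneg _ hx)

theorem IsIdealIn.restrict {S T I : Set G} (h : ε.IsIdealIn T I) (hIS : I ⊆ S) (hST : S ⊆ T) :
    ε.IsIdealIn S I := by
  obtain ⟨-, hne, hadd, hneg, hc, ha, hb⟩ := h
  exact ⟨hIS, hne, hadd, hneg, fun s hs => hc s (hST hs), fun a h s hs => ha a h s (hST hs),
    fun a h s hs => hb a h s (hST hs)⟩

theorem isIdealIn_setSum {S I J : Set G} (hS : ∀ a b, a ∈ S → b ∈ S → a + b ∈ S)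
    (hI : ε.IsIdealIn S I) (hJ : ε.IsIdealIn S J) : ε.IsIdealIn S (setSum I J) := by
  have hI0 := hI.zero_mem
  have hJ0 := hJ.zero_mem
  obtain ⟨hIS, -, hIadd, hIneg, hIc, hIa, hIb⟩ := hI
  obtain ⟨hJS, -, hJadd, hJneg, hJc, hJa, hJb⟩ := hJ
  refine ⟨?_, ⟨0, 0, hI0, 0, hJ0, by simp⟩, ?_, ?_, ?_, ?_, ?_⟩
  · rintro _ ⟨a, ha, b, hb, rfl⟩
    exact hS _ _ (hIS ha) (hJS hb)
  · rintro _ _ ⟨a, ha, b, hb, rfl⟩ ⟨a', ha', b', hb', rfl⟩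
    exact ⟨a + a', hIadd _ _ ha ha', (-a' + b + a') + b',
      hJadd _ _ (hJc _ (hIS ha') _ hb) hb', by simp [add_assoc]⟩
  · rintro _ ⟨a, ha, b, hb, rfl⟩
    exact ⟨-a, hIneg _ ha, - -a + -b + -a, hJc _ (hIS (hIneg _ ha)) _ (hJneg _ hb),
      by simp [add_assoc]⟩
  · rintro s hs _ ⟨a, ha, b, hb, rfl⟩
    exact ⟨_, hIc s hs a ha, _, hJc s hs b hb, by simp [add_assoc]⟩
  · rintro _ ⟨a, ha, b, hb, rfl⟩ s hs
    exact ⟨_, hIa a ha s hs, _, hJa b hb s hs, ε.add_act _ _ _⟩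
  · rintro _ ⟨a, ha, b, hb, rfl⟩ s hs
    -- `s ^ a = s + (-s + s ^ a)` lies in `S`, so `J` absorbs its bracket with `b`.
    have hsa : ε.act s a ∈ S := by
      simpa using hS _ _ hs (hIS (hIb a ha s hs))
    exact ⟨_, hIb a ha s hs, _, hJb b hb _ hsa, by simp [ε.act_add, add_assoc]⟩

theorem isIdealIn_finSum {S : Set G} (h0 : (0 : G) ∈ S)
    (hS : ∀ a b, a ∈ S → b ∈ S → a + b ∈ S) :
    ∀ {m : ℕ} (f : Fin m → Set G), (∀ i, ε.IsIdealIn S (f i)) → ε.IsIdealIn S (finSum f)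
  | 0, _, _ => by
    simp [finSum, IsIdealIn, h0, ε.zero_act, ε.act_zero]
  | _ + 1, _, hf =>
    isIdealIn_setSum hS (isIdealIn_finSum h0 hS _ fun i => hf i.castSucc) (hf (Fin.last _))

theorem zero_mem_finSum : ∀ {m : ℕ} (f : Fin m → Set G), (∀ i, (0 : G) ∈ f i) →
    (0 : G) ∈ finSum f
  | 0, _, _ => rfl
  | _ + 1, _, hf => ⟨0, zero_mem_finSum _ fun i => hf i.castSucc, 0, hf (Fin.last _), by simp⟩

theorem subset_finSum : ∀ {m : ℕ} (f : Fin m → Set G), (∀ i, (0 : G) ∈ f i) →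
    ∀ i, f i ⊆ finSum f
  | 0, _, _, i => i.elim0
  | _ + 1, f, hf, i => by
    intro x hx
    induction i using Fin.lastCases with
    | last => exact ⟨0, zero_mem_finSum _ fun i => hf i.castSucc, x, hx, by simp⟩
    | cast i =>
      exact ⟨x, subset_finSum (fun i => f i.castSucc) (fun i => hf i.castSucc) i hx, 0,
        hf (Fin.last _), by simp⟩

theorem isSubobject_subGen (X : Set G) : ε.IsSubobject (ε.subGen X) :=
  ⟨fun _ hH => hH.1.1, fun _ _ ha hb H hH => hH.1.2.1 _ _ (ha H hH) (hb H hH),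
    fun _ ha H hH => hH.1.2.2.1 _ (ha H hH),
    fun _ _ ha hb H hH => hH.1.2.2.2 _ _ (ha H hH) (hb H hH)⟩

theorem subset_subGen (X : Set G) : X ⊆ ε.subGen X := fun _ hx _ hH => hH.2 hx

theorem subGen_mono {X Y : Set G} (h : X ⊆ Y) : ε.subGen X ⊆ ε.subGen Y :=
  fun _ hx H hH => hx H ⟨hH.1, h.trans hH.2⟩

theorem IsSubobject.isIdealIn_self {S : Set G} (h : ε.IsSubobject S) : ε.IsIdealIn S S := by
  obtain ⟨h0, hadd, hneg, hact⟩ := h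
  exact ⟨subset_rfl, ⟨0, h0⟩, hadd, hneg,
    fun s hs a ha => hadd _ _ (hadd _ _ (hneg _ hs) ha) hs,
    fun a ha s hs => hact _ _ ha hs, fun a ha s hs => hadd _ _ (hneg _ hs) (hact _ _ hs ha)⟩

theorem isIdealIn_idealGenIn {S X : Set G} (hS : ε.IsSubobject S) (hX : X ⊆ S) :
    ε.IsIdealIn S (ε.idealGenIn S X) := by
  refine ⟨fun x hx => hx S ⟨hS.isIdealIn_self, hX⟩, ⟨0, fun I hI => hI.1.zero_mem⟩, ?_, ?_, ?_,
    ?_, ?_⟩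
  · exact fun a b ha hb I hI => hI.1.2.2.1 _ _ (ha I hI) (hb I hI)
  · exact fun a ha I hI => hI.1.2.2.2.1 _ (ha I hI)
  · exact fun s hs a ha I hI => hI.1.2.2.2.2.1 s hs a (ha I hI)
  · exact fun a ha s hs I hI => hI.1.2.2.2.2.2.1 a (ha I hI) s hs
  · exact fun a ha s hs I hI => hI.1.2.2.2.2.2.2 a (ha I hI) s hs

theorem commGens_subset_subGen (A B : Set G) :
    {x | ∃ a ∈ A, ∃ b ∈ B, x = ε.bracket a b ∨ x = ε.bracket b a ∨ x = gcomm a b} ⊆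
      ε.subGen (A ∪ B) := by
  obtain ⟨-, hadd, hneg, hact⟩ := isSubobject_subGen (ε := ε) (A ∪ B)
  rintro x ⟨a, ha, b, hb, h⟩
  have ha' := subset_subGen (ε := ε) (A ∪ B) (Or.inl ha)
  have hb' := subset_subGen (ε := ε) (A ∪ B) (Or.inr hb)
  rcases h with rfl | rfl | rfl
  · exact hadd _ _ (hneg _ ha') (hact _ _ ha' hb')
  · exact hadd _ _ (hneg _ hb') (hact _ _ hb' ha')
  · rw [gcomm, sub_eq_add_neg]
    exact hadd _ _ (hadd _ _ (hadd _ _ (hneg _ ha') (hneg _ hb')) ha') hb'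

theorem isIdealIn_commObj (A B : Set G) : ε.IsIdealIn (ε.subGen (A ∪ B)) (ε.commObj A B) :=
  isIdealIn_idealGenIn (isSubobject_subGen _) (commGens_subset_subGen A B)

/-- The commutator is monotone, even though the ambient subobject grows with `A` and `B`: an ideal
of the larger subobject meets the smaller one in an ideal of the latter. -/
theorem commObj_mono {A B A' B' : Set G} (hA : A ⊆ A') (hB : B ⊆ B') :
    ε.commObj A B ⊆ ε.commObj A' B' := by
  intro x hx I hI
  have hST : ε.subGen (A ∪ B) ⊆ ε.subGen (A' ∪ B') := subGen_mono (Set.union_subset_union hA hB)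
  have hself := (isSubobject_subGen (ε := ε) (A ∪ B)).isIdealIn_self
  have hI0 := hI.1.zero_mem
  have hS0 := hself.zero_mem
  obtain ⟨-, -, hadd, hneg, hc, ha, hb⟩ := hself
  obtain ⟨⟨-, -, hadd', hneg', hc', ha', hb'⟩, hgen⟩ := hI
  refine (hx (I ∩ ε.subGen (A ∪ B)) ⟨⟨Set.inter_subset_right, ⟨0, hI0, hS0⟩, ?_, ?_, ?_, ?_, ?_⟩,
    ?_⟩).1
  · exact fun a b h k => ⟨hadd' _ _ h.1 k.1, hadd _ _ h.2 k.2⟩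
  · exact fun a h => ⟨hneg' _ h.1, hneg _ h.2⟩
  · exact fun s hs a h => ⟨hc' s (hST hs) a h.1, hc s hs a h.2⟩
  · exact fun a h s hs => ⟨ha' a h.1 s (hST hs), ha a h.2 s hs⟩
  · exact fun a h s hs => ⟨hb' a h.1 s (hST hs), hb a h.2 s hs⟩
  · intro y hy
    refine ⟨hgen ?_, commGens_subset_subGen A B hy⟩
    obtain ⟨a, h, b, k, e⟩ := hy
    exact ⟨a, hA h, b, hB k, e⟩

theorem commObj_subset_lcs_succ {k l n : ℕ} (h : k + l = n) :
    ε.commObj (ε.lcs k) (ε.lcs l) ⊆ ε.lcs (n + 1) := by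
  rw [lcs]
  have := subset_finSum
    (fun i : Fin (n + 1) => ε.commObj (ε.lcs i.val) (ε.lcs (n - i.val)))
    (fun i => (isIdealIn_commObj _ _).zero_mem) ⟨k, by omega⟩
  have e : n - k = l := by omega
  simpa [e] using this

theorem isIdealIn_lcs_succ (ε : GwA G) (n : ℕ) : ε.IsIdealIn (ε.lcs n) (ε.lcs (n + 1)) := by
  induction n using Nat.strong_induction_on with
  | _ n ih =>
  have hanti : ∀ i ≤ n, ε.lcs n ⊆ ε.lcs i := by
    intro i hi
    refine Nat.decreasingInduction' (P := fun k => ε.lcs n ⊆ ε.lcs k) ?_ hi subset_rfl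
    exact fun k hk _ h => h.trans (ih k hk).1
  have hclosed : (0 : G) ∈ ε.lcs n ∧ ∀ a b, a ∈ ε.lcs n → b ∈ ε.lcs n → a + b ∈ ε.lcs n := by
    cases n with
    | zero => simp [lcs]
    | succ m => exact ⟨(ih m m.lt_succ_self).zero_mem, (ih m m.lt_succ_self).2.2.1⟩
  have hterm : ∀ i ≤ n, ε.commObj (ε.lcs i) (ε.lcs (n - i)) ⊆ ε.lcs n := by
    intro i hi
    cases n with
    | zero => simp [lcs]
    | succ m =>
      cases i with
      | zero =>
        exact (commObj_mono subset_rfl (ih m m.lt_succ_self).1).trans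
          (commObj_subset_lcs_succ (Nat.zero_add m))
      | succ k =>
        exact (commObj_mono (ih k (by omega)).1 subset_rfl).trans
          (commObj_subset_lcs_succ (by omega))
  rw [lcs.eq_2]
  refine isIdealIn_finSum hclosed.1 hclosed.2 _ fun i => ?_
  exact (isIdealIn_commObj _ _).restrict (hterm _ (by omega))
    ((hanti _ (by omega)).trans (Set.subset_union_left.trans (subset_subGen _)))

end GwA

/-- In the lower central series `G = G₁ ⊃ G₂ ⊃ ⋯` of a group with action
`(G, ε)`, for each `n ≥ 1` the term `G_{n+1}` is an ideal of `G_n`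
(here `lcs ε k = G_{k+1}`). -/
theorem gwa_lcs_ideal {G : Type*} [AddGroup G] (ε : GwA G) :
    ∀ n : ℕ, 1 ≤ n → ε.IsIdealIn (ε.lcs (n - 1)) (ε.lcs n) := by
  rintro (_ | n) hn
  · omega
  · exact GwA.isIdealIn_lcs_succ ε n
end

section
/- Let (G, ε) be a group with action. Then the center Z(G, ε) = {g ∈ G : g + h = h + g, g = g^h, and h = h^g for all h ∈ G} is an ideal of (G, ε). -/
/-- The center `Z(G, ε)` of a group with action is an ideal of `(G, ε)`. -/
theorem gwa_center_isIdeal {G : Type*} [AddGroup G] (ε : GwA G) :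
    ε.IsIdeal ε.center := by
  have zero_mem : (0 : G) ∈ ε.center := fun h =>
    ⟨by simp, ε.zero_act h, ε.act_zero h⟩
  refine ⟨⟨0, zero_mem⟩, fun a b ha hb h => ⟨?_, ?_, ?_⟩, fun a ha h => ⟨?_, ?_, ?_⟩,
    fun g a ha => ?_, fun a ha g => ?_, fun a ha g => ?_⟩
  · rw [add_assoc, (hb h).1, ← add_assoc, (ha h).1, add_assoc]
  · rw [ε.add_act, (ha h).2.1, (hb h).2.1]
  · rw [ε.act_add, (ha h).2.2, (hb h).2.2]
  · exact (AddCommute.neg_left (ha h).1).eq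
  · -- `a ^ h + (-a) ^ h = 0 ^ h = 0` and `a ^ h = a`.
    have key := ε.add_act a (-a) h
    rw [add_neg_cancel, ε.zero_act, (ha h).2.1] at key
    exact (neg_eq_of_add_eq_zero_right key.symm).symm
  · -- `h = h ^ (a + (-a)) = (h ^ a) ^ (-a)` and `h ^ a = h`.
    have key := ε.act_add h a (-a)
    rw [add_neg_cancel, ε.act_zero, (ha h).2.2] at key
    exact key.symm
  · rwa [add_assoc, (ha g).1, neg_add_cancel_left]
  · rwa [(ha g).2.1]
  · rwa [(ha g).2.2, neg_add_cancel]
end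

section
/- Let (G, ε_G) and (H, ε_H) be groups with action, let α : H → G be an injective morphism of groups with action, and let β : G × H → G be a morphism of groups with action (where G × H carries the product group structure and componentwise action (g,h)^{(g',h')} = (g^{g'}, h^{h'})) such that β(g, 0) = g for all g ∈ G and β(0, h) = α(h) for all h ∈ H. Then α(h) ∈ Z(G, ε_G) for all h ∈ H; i.e., the image of α is contained in the center of (G, ε_G). -/
/-- If `α : H → G` is an injective morphism of groups with action and
`β : G × H → G` is a morphism of groups with action (product structure, componentwise
action) with `β (g, 0) = g` and `β (0, h) = α h`, then the image of `α` lies in the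
center of `(G, ε_G)`. -/
theorem gwa_central_subobject_in_center {G H : Type*} [AddGroup G] [AddGroup H]
    (εG : GwA G) (εH : GwA H) (α : H →+ G) (hinj : Function.Injective α)
    (hα : ∀ a b : H, α (εH.act a b) = εG.act (α a) (α b))
    (β : G × H →+ G)
    (hβ : ∀ p q : G × H, β (εG.act p.1 q.1, εH.act p.2 q.2) = εG.act (β p) (β q))
    (hβ₁ : ∀ g : G, β (g, 0) = g) (hβ₂ : ∀ h : H, β (0, h) = α h) :
    ∀ h : H, α h ∈ εG.center := by
  intro h g
  have comm : α h + g = g + α h := by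
    rw [← hβ₂ h]
    nth_rewrite 1 [← hβ₁ g]
    nth_rewrite 2 [← hβ₁ g]
    rw [← map_add, ← map_add]
    simp
  have act_left := hβ (0, h) (g, 0)
  have act_right := hβ (g, 0) (0, h)
  simp only [εG.zero_act, εG.act_zero, εH.zero_act, εH.act_zero, hβ₁, hβ₂]
    at act_left act_right
  exact ⟨comm, act_left.symm, act_right.symm⟩
end

section
/- Let (G, ε) be a nilpotent group with action of nilpotency class 1 or 2; i.e., the third term G₃ of the lower central series of (G, ε) is the trivial subgroup {0}. Then (G, ε) satisfies Condition 1: for all x, y, z ∈ G, x - x^{(z^x)} + x^{y + z^x} - x + x^z - x^{z + y^z} = 0. -/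
namespace GwA

variable {G : Type*} [AddGroup G]

/-- Every ideal is nonempty and closed under `+` and `-`, so it contains `0`. -/
lemma zero_mem_commObj (ε : GwA G) (A B : Set G) : (0 : G) ∈ ε.commObj A B := by
  rintro I ⟨⟨-, ⟨a, ha⟩, hadd, hneg, -⟩, -⟩
  simpa using hadd _ _ ha (hneg _ ha)

lemma subset_idealGenIn (ε : GwA G) (S X : Set G) : X ⊆ ε.idealGenIn S X :=
  fun _ hx _ hI => hI.2 hx

lemma bracket_mem_lcs_one (ε : GwA G) (a b : G) : ε.bracket a b ∈ ε.lcs 1 := by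
  rw [lcs]
  refine ⟨0, rfl, ε.bracket a b, ?_, (zero_add _).symm⟩
  apply subset_idealGenIn
  exact ⟨a, by simp [lcs], b, by simp [lcs], Or.inl rfl⟩

lemma commObj_subset_lcs_two (ε : GwA G) : ε.commObj (ε.lcs 0) (ε.lcs 1) ⊆ ε.lcs 2 := by
  intro a ha
  rw [lcs]
  exact ⟨a, ⟨0, rfl, a, ha, (zero_add _).symm⟩, 0, zero_mem_commObj _ _ _, (add_zero _).symm⟩

lemma mem_center_of_mem_lcs_one (ε : GwA G) (h : ε.lcs 2 = {0}) {c : G} (hc : c ∈ ε.lcs 1) :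
    c ∈ ε.center := by
  intro g
  have key : ∀ x, (x = ε.bracket g c ∨ x = ε.bracket c g ∨ x = gcomm g c) → x = 0 := by
    intro x hx
    have hx' : x ∈ ε.lcs 2 :=
      ε.commObj_subset_lcs_two (ε.subset_idealGenIn _ _ ⟨g, by simp [lcs], c, hc, hx⟩)
    rw [h] at hx'
    exact hx'
  have h1 := key _ (Or.inl rfl)
  have h2 := key _ (Or.inr (Or.inl rfl))
  have h3 := key _ (Or.inr (Or.inr rfl))
  refine ⟨?_, (neg_add_eq_zero.mp h2).symm, (neg_add_eq_zero.mp h1).symm⟩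
  have h4 : -(c + g) + (g + c) = 0 := by
    simpa [gcomm, sub_eq_add_neg, neg_add_rev, add_assoc] using h3
  exact neg_add_eq_zero.mp h4

end GwA

/-- A nilpotent group with action of nilpotency class 1 or 2
(i.e. `G₃ = {0}`, and `lcs ε 2 = G₃`) satisfies Condition 1. -/
theorem gwa_class_le_two_cond1 {G : Type*} [AddGroup G] (ε : GwA G)
    (h : ε.lcs 2 = {0}) : ε.Cond1 := by
  have hcen : ∀ a b : G, ε.bracket a b ∈ ε.center := fun a b =>
    ε.mem_center_of_mem_lcs_one h (ε.bracket_mem_lcs_one a b)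
  have hact : ∀ a b : G, ε.act a b = a + ε.bracket a b := fun a b => by simp [GwA.bracket]
  -- Exponents only matter modulo brackets.
  have hexp : ∀ x a b : G, ε.act x (ε.act a b) = ε.act x a := fun x a b => by
    rw [hact a b, ε.act_add, (hcen a b _).2.2]
  have hsum : ∀ x a b : G, ε.act x (a + b) = x + ε.bracket x b + ε.bracket x a :=
    fun x a b => by
      rw [ε.act_add, hact x a, ε.add_act, (hcen x a b).2.1, hact x b]
  intro x y z
  have h1 : ε.act x (y + ε.act z x) = ε.act x (y + z) := by
    rw [ε.act_add, hexp, ← ε.act_add]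
  have h2 : ε.act x (z + ε.act y z) = ε.act x (z + y) := by
    rw [ε.act_add, hexp, ← ε.act_add]
  rw [h1, h2, hexp, hsum, hsum, hact x z]
  have hp := fun g => (hcen x z g).1
  generalize ε.bracket x z = p at *
  generalize ε.bracket x y = q at *
  calc x - (x + p) + (x + p + q) - x + (x + p) - (x + q + p)
      = x + q - x + (x + p) - (x + q + p) := by
        rw [← hp x]; simp [sub_eq_add_neg, add_assoc]
    _ = 0 := by simp [sub_eq_add_neg, add_assoc]
end

section
/- Let G be any group (written additively, though not necessarily abelian). Then the conjugation action g^h = -h + g + h makes G a group with action (i.e., it satisfies g^{h+k} = (g^h)^k, g^0 = g, (g+g')^h = g^h + g'^h, and 0^h = 0), and this group with action satisfies Condition 1: for all x, y, z ∈ G, x - x^{(z^x)} + x^{y + z^x} - x + x^z - x^{z + y^z} = 0. -/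
/-- The conjugation action `g^h = -h + g + h` makes any group `G`
a group with action, and this group with action satisfies Condition 1. -/
theorem gwa_conjugation_cond1 {G : Type*} [AddGroup G] :
    ∃ ε : GwA G, (∀ g h : G, ε.act g h = -h + g + h) ∧ ε.Cond1 := by
  refine ⟨⟨fun g h => -h + g + h, ?_, ?_, ?_, ?_⟩, fun _ _ => rfl, ?_⟩
  · intro g h k
    simp [add_assoc]
  · intro g
    simp
  · intro g g' h
    simp [add_assoc]
  · intro h
    simp
  -- With `z ^ x = -x + z + x`, the first five terms collapse to `-z + x ^ y + z = x ^ (y + z)`,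
  -- which the last term cancels because `z + y ^ z = y + z`; this is free cancellation.
  · intro x y z
    simp [sub_eq_add_neg, add_assoc]
end

section
/- Let Q₈ be the quaternion group of order 8. Then there are exactly 52 group-with-action structures on Q₈, i.e., exactly 52 group homomorphisms from Q₈ to its automorphism group Aut(Q₈). -/
namespace QuaternionCount

open QuaternionGroup

/-- The defining relations of `Q₈` for the images `u`, `v` of the generators `a 1`, `xa 0`.
They imply `u ^ 4 = 1`. -/
def Rel {H : Type*} [Mul H] (u v : H) : Prop := u * u = v * v ∧ u * v * u = v

instance {H : Type*} [Mul H] [DecidableEq H] (u v : H) : Decidable (Rel u v) :=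
  inferInstanceAs (Decidable (_ ∧ _))

/-- The map `Q₈ → H` with `a 1 ↦ u` and `xa 0 ↦ v`; it is a homomorphism when `Rel u v` holds. -/
def ext {H : Type*} [Monoid H] (u v : H) : QuaternionGroup 2 → H
  | a i => u ^ (ZMod.val (n := 4) i)
  | xa i => v * u ^ (ZMod.val (n := 4) i)

section
variable {H : Type*} [Group H] {u v : H}

lemma Rel.pow_four (h : Rel u v) : u ^ 4 = 1 := by
  obtain ⟨h1, h2⟩ := h
  have h3 : u * v = v * u⁻¹ := by rw [eq_mul_inv_iff_mul_eq, h2]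
  -- `v` commutes with `v² = u²`, while conjugation by `v` inverts `u`.
  have h4 : u * u * v = v * (u⁻¹ * u⁻¹) := by
    rw [mul_assoc, h3, ← mul_assoc, h3, mul_assoc]
  have h5 : u * u * v = v * (u * u) := by rw [h1, mul_assoc]
  have h6 : u * u = u⁻¹ * u⁻¹ := mul_left_cancel (h5.symm.trans h4)
  calc u ^ 4 = (u * u) * (u * u) := by simp only [pow_succ, pow_zero, one_mul, mul_assoc]
    _ = (u⁻¹ * u⁻¹) * (u * u) := by rw [← h6]
    _ = 1 := by group

lemma pow_val_add (h : u ^ 4 = 1) (i j : ZMod 4) :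
    u ^ (i + j).val = u ^ i.val * u ^ j.val := by
  rw [ZMod.val_add, ← pow_add, ← pow_eq_pow_mod _ h]

lemma pow_val_neg (h : u ^ 4 = 1) (i : ZMod 4) : u ^ (-i).val = (u ^ i.val)⁻¹ := by
  rw [eq_inv_iff_mul_eq_one, ← pow_val_add h]
  simp

lemma pow_val_sub (h : u ^ 4 = 1) (i j : ZMod 4) :
    u ^ (i - j).val = u ^ i.val * (u ^ j.val)⁻¹ := by
  rw [sub_eq_add_neg, pow_val_add h, pow_val_neg h]

lemma Rel.pow_mul_eq (h : Rel u v) (n : ℕ) : u ^ n * v = v * (u ^ n)⁻¹ := by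
  have h3 : u * v = v * u⁻¹ := by rw [eq_mul_inv_iff_mul_eq, h.2]
  rw [← inv_pow]
  exact (SemiconjBy.pow_right (show SemiconjBy v u⁻¹ u from h3.symm) n).symm

lemma Rel.ext_mul (h : Rel u v) (x y : QuaternionGroup 2) :
    ext u v (x * y) = ext u v x * ext u v y := by
  have h4 := h.pow_four
  have hc (i j : ZMod 4) : u ^ i.val * (u ^ j.val)⁻¹ = (u ^ j.val)⁻¹ * u ^ i.val :=
    (((Commute.refl u).pow_pow i.val j.val).inv_right).eq
  rcases x with i | i <;> rcases y with j | j
  · exact pow_val_add h4 i j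
  · change v * u ^ (ZMod.val (n := 4) (j - i)) = u ^ (ZMod.val (n := 4) i) * (v * _)
    rw [← mul_assoc, h.pow_mul_eq, pow_val_sub h4, hc, mul_assoc]
  · change v * u ^ (ZMod.val (n := 4) (i + j)) = _
    rw [pow_val_add h4, ← mul_assoc]
    rfl
  · change u ^ (ZMod.val (n := 4) (2 + j - i)) =
      v * u ^ (ZMod.val (n := 4) i) * (v * u ^ (ZMod.val (n := 4) j))
    have h2 : u ^ (ZMod.val (n := 4) 2) = v * v := by
      rw [← h.1]; exact pow_two u
    rw [pow_val_sub h4, pow_val_add h4, h2, mul_assoc v (u ^ _), ← mul_assoc _ v, h.pow_mul_eq,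
      mul_assoc (v * v), hc]
    simp only [mul_assoc]

lemma ext_a_one (u v : H) : ext u v (a 1) = u := pow_one u

lemma ext_xa_zero (u v : H) : ext u v (xa 0) = v :=
  (congrArg (v * ·) (pow_zero u)).trans (mul_one v)

lemma ext_map (f : QuaternionGroup 2 →* H) : ext (f (a 1)) (f (xa 0)) = f := by
  have ha (i : ZMod 4) : f (a 1) ^ i.val = f (a i) := by
    rw [← map_pow, a_one_pow]
    exact congrArg (fun j => f (a j)) (ZMod.natCast_zmod_val i)
  funext x
  rcases x with i | i
  · exact ha i
  · change f (xa 0) * f (a 1) ^ (ZMod.val (n := 4) i) = _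
    rw [ha, ← map_mul, xa_mul_a, zero_add]

lemma rel_generators : Rel (a 1 : QuaternionGroup 2) (xa 0) := by decide

lemma rel_map (f : QuaternionGroup 2 →* H) : Rel (f (a 1)) (f (xa 0)) := by
  constructor
  · rw [← map_mul, ← map_mul, rel_generators.1]
  · rw [← map_mul, ← map_mul, rel_generators.2]

end

/-- Homomorphisms `Q₈ →* H` are the pairs in `H` satisfying the relations of `Q₈`. -/
def homEquiv (H : Type*) [Group H] : (QuaternionGroup 2 →* H) ≃ {p : H × H // Rel p.1 p.2} where
  toFun f := ⟨(f (a 1), f (xa 0)), rel_map f⟩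
  invFun p := MonoidHom.mk' (ext p.1.1 p.1.2) p.2.ext_mul
  left_inv f := DFunLike.coe_injective (ext_map f)
  right_inv p := Subtype.ext (Prod.ext (ext_a_one p.1.1 p.1.2) (ext_xa_zero p.1.1 p.1.2))

/-- Codes of automorphisms of `Q₈`: the possible images of the generators `(a 1, xa 0)`. -/
abbrev AutCode : Type :=
  {p : QuaternionGroup 2 × QuaternionGroup 2 // Rel p.1 p.2 ∧ p.1 * p.1 ≠ 1}

lemma ext_injective : ∀ u v : QuaternionGroup 2, Rel u v ∧ u * u ≠ 1 →
    Function.Injective (ext u v) := by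
  unfold Function.Injective
  decide +kernel

/-- An automorphism of `Q₈` is determined by the images of `a 1` and `xa 0`. The condition
`u * u ≠ 1` suffices for bijectivity because every nontrivial normal subgroup of `Q₈`
contains `a 2`. -/
noncomputable def autEquiv : MulAut (QuaternionGroup 2) ≃ AutCode where
  toFun f := ⟨(f (a 1), f (xa 0)), rel_map f.toMonoidHom, by
    rw [← map_mul, Ne, map_eq_one_iff f f.injective]; decide⟩
  invFun p := MulEquiv.ofBijective (MonoidHom.mk' (ext p.1.1 p.1.2) p.2.1.ext_mul)
    (Finite.injective_iff_bijective.mp (ext_injective _ _ p.2))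
  left_inv f := DFunLike.coe_injective (ext_map f.toMonoidHom)
  right_inv p := Subtype.ext (Prod.ext (ext_a_one p.1.1 p.1.2) (ext_xa_zero p.1.1 p.1.2))

/-- Composition of endomorphisms of `Q₈` in terms of the images of the generators. -/
def comp (p q : QuaternionGroup 2 × QuaternionGroup 2) : QuaternionGroup 2 × QuaternionGroup 2 :=
  (ext p.1 p.2 q.1, ext p.1 p.2 q.2)

lemma autEquiv_mul (f g : MulAut (QuaternionGroup 2)) :
    (autEquiv (f * g)).1 = comp (autEquiv f).1 (autEquiv g).1 := by
  have h : ext (f (a 1)) (f (xa 0)) = f := ext_map f.toMonoidHom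
  change (f (g (a 1)), f (g (xa 0))) =
    (ext (f (a 1)) (f (xa 0)) (g (a 1)), ext (f (a 1)) (f (xa 0)) (g (xa 0)))
  rw [h]

/-- The relations of `Q₈` for a pair of automorphisms, in terms of their codes. -/
abbrev CodeRel (p q : QuaternionGroup 2 × QuaternionGroup 2) : Prop :=
  comp p p = comp q q ∧ comp (comp p q) p = q

lemma rel_iff_codeRel (f g : MulAut (QuaternionGroup 2)) :
    Rel f g ↔ CodeRel (autEquiv f).1 (autEquiv g).1 := by
  simp only [Rel, CodeRel, ← autEquiv_mul, ← Subtype.ext_iff]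
  exact and_congr autEquiv.apply_eq_iff_eq.symm autEquiv.apply_eq_iff_eq.symm

lemma card_codeRel : Fintype.card {p : AutCode × AutCode // CodeRel p.1.1 p.2.1} = 52 := by
  decide +kernel

end QuaternionCount

/-- There are exactly 52 group-with-action structures on the quaternion
group `Q₈` of order 8, i.e. exactly 52 group homomorphisms `Q₈ →* Aut Q₈`. -/
theorem quaternion_gwa_count :
    Nat.card (QuaternionGroup 2 →* MulAut (QuaternionGroup 2)) = 52 := by
  rw [Nat.card_congr ((QuaternionCount.homEquiv _).trans
    ((QuaternionCount.autEquiv.prodCongr QuaternionCount.autEquiv).subtypeEquiv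
      (q := fun p => QuaternionCount.CodeRel p.1.1 p.2.1)
      fun p => QuaternionCount.rel_iff_codeRel p.1 p.2)),
    Nat.card_eq_fintype_card, QuaternionCount.card_codeRel]
end
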